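/- Let F : ℝ^d → ℝ be convex, twice continuously differentiable with L-Lipschitz Hessian, attaining its minimum at x*, and let f₁ : ℝ^d → ℝ be twice continuously differentiable with ‖∇²f₁(x) − ∇²F(x)‖_op ≤ β for all x (β > 0, L > 0). For M > 0 define the model F̃_M(x, z) := F(z) + ⟨∇F(z), x − z⟩ + (1/2)⟨(∇²f₁(z) + 3β·I)(x − z), x − z⟩ + (M/6)‖x − z‖³. Let x₀ ∈ ℝ^d and define sequences (x_t), (y_t), (w_t) and functions ψ_t as follows: x₁ is a global minimizer of x ↦ F̃_{4L}(x, x₀); ψ₁(x) := F(x₁) + 8β‖x − x₀‖² + 16L‖x − x₀‖³ and y₁ is a global minimizer of ψ₁; A₀ = 1 and for t ≥ 1, A_t = A_{t−1}(1 − 3/(t+3)); for t ≥ 1, w_t = (1 − 3/(t+3))x_t + (3/(t+3))y_t, x_{t+1} is a global minimizer of x ↦ F̃_{4L}(x, w_t), ψ_{t+1}(x) := ψ_t(x) + 4β‖x − x₀‖² + (3/(A_t(t+3)))(F(x_{t+1}) + ⟨∇F(x_{t+1}), x − x_{t+1}⟩), and y_{t+1} is a global minimizer of ψ_{t+1}.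 Then for every t ≥ 1, F(x_t) − F(x*) ≤ 98L‖x₀ − x*‖³ / t³ + 48β‖x₀ − x*‖² / t². -/

import Mathlib

open scoped RealInnerProductSpace

/-- The cubic-regularized second-order model
`F̃_M(x, z) = F(z) + ⟨∇F(z), x−z⟩ + ½⟨(∇²f₁(z) + 3β·I)(x−z), x−z⟩ + (M/6)‖x−z‖³`,
where the Hessian `∇²f₁(z)` is realized as `fderiv ℝ (gradient f₁) z`. -/
noncomputable def cubicModel {d : ℕ} (F f₁ : EuclideanSpace ℝ (Fin d) → ℝ)
    (β M : ℝ) (x z : EuclideanSpace ℝ (Fin d)) : ℝ :=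
  F z + ⟪gradient F z, x - z⟫
    + (1 / 2) * ⟪fderiv ℝ (gradient f₁) z (x - z) + (3 * β) • (x - z), x - z⟫
    + (M / 6) * ‖x - z‖ ^ 3

/-!
A minimizer `x` of the cubic model at `z` solves, up to a relative error `1 / 3`, the proximal
equation `∇ F x = (3β + 2L‖z - x‖) (z - x)`. Hence `∇ F x` is well aligned with `z - x`, and
`‖∇ F x‖ ρ ≤ ⟪∇ F x, z - x⟫ + (4/3) β ρ² + (8/9) L ρ³` for every `ρ ≥ 0`.

Let `T t = t (t + 1) (t + 2) / 6`, which is `1 / A (t - 1)`. The regularizers make `ψ t` grow by at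
least `2 (t + 1) β r² + 4 L r³` at distance `r` from its minimizer `y t`. With `ρ = 3 r / (t + 3)`
this growth pays for the error terms above, so that `T t * F (x t) ≤ ψ t (y t)` by induction.
By convexity of `F`, `ψ t` at a minimizer `s` of `F` is at most
`F (x 1) + (T t - 1) F s + 4 (t + 1) β ‖s - x 0‖² + 16 L ‖s - x 0‖³`, and `F (x 1) - F s` is bounded
by the trapezoid rule between `s`, where `∇ F` vanishes, and `x 1`. Dividing by `T t` gives the
rate.
-/

section Calculus

open scoped Gradient

theorem hasDerivAt_add_smul {E : Type*} [NormedAddCommGroup E] [NormedSpace ℝ E] (x h : E)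
    (s : ℝ) : HasDerivAt (fun s : ℝ ↦ x + s • h) h s := by
  simpa using ((hasDerivAt_id s).smul_const h).const_add x

theorem norm_sub_sub_fderiv_le_of_lipschitz_fderiv {E G : Type*} [NormedAddCommGroup E]
    [NormedSpace ℝ E] [NormedAddCommGroup G] [NormedSpace ℝ G] {f : E → G} {L : ℝ}
    (hf : Differentiable ℝ f) (hlip : ∀ x y, ‖fderiv ℝ f x - fderiv ℝ f y‖ ≤ L * ‖x - y‖)
    (x y : E) : ‖f y - f x - fderiv ℝ f x (y - x)‖ ≤ L / 2 * ‖y - x‖ ^ 2 := by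
  set h := y - x with hh
  let remainder : ℝ → G := fun s ↦ f (x + s • h) - f x - s • fderiv ℝ f x h
  have hderiv (s : ℝ) :
      HasDerivAt remainder (fderiv ℝ f (x + s • h) h - fderiv ℝ f x h) s := by
    have hcomp := (hf _).hasFDerivAt.comp_hasDerivAt s (hasDerivAt_add_smul x h s)
    exact ((hcomp.sub_const (f x)).sub ((hasDerivAt_id s).smul_const (fderiv ℝ f x h))).congr_deriv
      (by rw [one_smul])
  have hbound (s : ℝ) :
      HasDerivAt (fun s : ℝ ↦ L / 2 * ‖h‖ ^ 2 * s ^ 2) (L * ‖h‖ ^ 2 * s) s :=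
    ((hasDerivAt_pow 2 s).const_mul _).congr_deriv (by push_cast; ring)
  have hle : ∀ s ∈ Set.Ico (0 : ℝ) 1,
      ‖fderiv ℝ f (x + s • h) h - fderiv ℝ f x h‖ ≤ L * ‖h‖ ^ 2 * s := fun s hs ↦ by
    calc ‖fderiv ℝ f (x + s • h) h - fderiv ℝ f x h‖
        ≤ ‖fderiv ℝ f (x + s • h) - fderiv ℝ f x‖ * ‖h‖ :=
          (fderiv ℝ f (x + s • h) - fderiv ℝ f x).le_opNorm h
      _ ≤ L * ‖x + s • h - x‖ * ‖h‖ := by gcongr; exact hlip _ _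
      _ = L * ‖h‖ ^ 2 * s := by
          rw [add_sub_cancel_left, norm_smul, Real.norm_of_nonneg hs.1]; ring
  have key := image_norm_le_of_norm_deriv_right_le_deriv_boundary
    (fun s _ ↦ (hderiv s).continuousAt.continuousWithinAt)
    (fun s _ ↦ (hderiv s).hasDerivWithinAt) (by simp [remainder]) hbound hle
    (Set.right_mem_Icc.2 zero_le_one)
  simpa [remainder, hh] using key

variable {E : Type*} [NormedAddCommGroup E] [InnerProductSpace ℝ E] [CompleteSpace E]
  {F : E → ℝ} {L : ℝ}

theorem differentiable_gradient_of_contDiff (hF : ContDiff ℝ 2 F) : Differentiable ℝ (∇ F) :=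
  (InnerProductSpace.toDual ℝ E).symm.differentiable.comp
    ((hF.fderiv_right (m := 1) (by norm_num)).differentiable one_ne_zero)

theorem inner_fderiv_gradient (z u v : E) :
    ⟪fderiv ℝ (∇ F) z u, v⟫ = fderiv ℝ (fderiv ℝ F) z u v := by
  have hcomp : ∇ F = (InnerProductSpace.toDual ℝ E).symm ∘ fderiv ℝ F := rfl
  rw [hcomp, LinearIsometryEquiv.comp_fderiv]
  exact InnerProductSpace.toDual_symm_apply

theorem isSymmetric_fderiv_gradient (hF : ContDiff ℝ 2 F) (z : E) :
    (fderiv ℝ (∇ F) z : E →ₗ[ℝ] E).IsSymmetric := fun u v ↦ by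
  have hsymm : IsSymmSndFDerivAt ℝ F z := hF.contDiffAt.isSymmSndFDerivAt (by simp)
  rw [ContinuousLinearMap.coe_coe, real_inner_comm _ u, inner_fderiv_gradient,
    inner_fderiv_gradient]
  exact hsymm u v

theorem gradient_eq_zero_of_forall_le {x : E} (hmin : ∀ u, F x ≤ F u) : ∇ F x = 0 := by
  have hloc : IsLocalMin F x := Filter.Eventually.of_forall hmin
  simp [gradient, hloc.fderiv_eq_zero]

theorem hasDerivAt_comp_line (hF : Differentiable ℝ F) (x h : E) (s : ℝ) :
    HasDerivAt (fun s : ℝ ↦ F (x + s • h)) ⟪∇ F (x + s • h), h⟫ s :=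
  (hF _).hasGradientAt.hasFDerivAt.comp_hasDerivAt s (hasDerivAt_add_smul x h s)

theorem add_inner_gradient_le_of_convexOn (hconv : ConvexOn ℝ Set.univ F)
    (hF : Differentiable ℝ F) (x y : E) : F x + ⟪∇ F x, y - x⟫ ≤ F y := by
  have hline : ConvexOn ℝ Set.univ (fun s : ℝ ↦ F (x + s • (y - x))) := by
    have hcomp := hconv.comp_affineMap (AffineMap.lineMap x y : ℝ →ᵃ[ℝ] E)
    simpa [Function.comp_def, AffineMap.lineMap_apply, add_comm] using hcomp
  have hslope := hline.le_slope_of_hasDerivAt (Set.mem_univ 0) (Set.mem_univ 1) one_pos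
    (hasDerivAt_comp_line hF x (y - x) 0)
  simp only [slope_def_field, zero_smul, add_zero, one_smul, add_sub_cancel, sub_zero,
    div_one] at hslope
  linarith

theorem abs_sub_sub_trapezoid_le (hF : Differentiable ℝ F) (hF' : Differentiable ℝ (∇ F))
    (hlip : ∀ x y, ‖fderiv ℝ (∇ F) x - fderiv ℝ (∇ F) y‖ ≤ L * ‖x - y‖) (x y : E) :
    |F y - F x - 1 / 2 * ⟪∇ F x + ∇ F y, y - x⟫| ≤ L / 12 * ‖y - x‖ ^ 3 := by
  set h := y - x with hh
  let err : ℝ → ℝ := fun s ↦ F (x + s • h) - F x - s * (1 / 2 * ⟪∇ F x + ∇ F (x + s • h), h⟫)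
  let err' : ℝ → ℝ := fun s ↦
    -(1 / 2) * ⟪∇ F x - ∇ F (x + s • h) - fderiv ℝ (∇ F) (x + s • h) (x - (x + s • h)), h⟫
  have hderiv (s : ℝ) : HasDerivAt err (err' s) s := by
    have hgrad := (((hF' _).hasFDerivAt.comp_hasDerivAt s (hasDerivAt_add_smul x h s)).const_add
      (∇ F x)).inner ℝ (hasDerivAt_const s h)
    refine (((hasDerivAt_comp_line hF x h s).sub_const (F x)).sub
      ((hasDerivAt_id s).mul (hgrad.const_mul (1 / 2)))).congr_deriv ?_
    simp only [err', inner_add_left, inner_sub_left, sub_add_cancel_left, map_neg, map_smul,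
      inner_neg_left, real_inner_smul_left, inner_zero_right, Function.comp_apply, id_eq]
    ring
  have hbound (s : ℝ) :
      HasDerivAt (fun s : ℝ ↦ L / 12 * ‖h‖ ^ 3 * s ^ 3) (L / 4 * ‖h‖ ^ 3 * s ^ 2) s :=
    ((hasDerivAt_pow 3 s).const_mul _).congr_deriv (by push_cast; ring)
  -- `err'` is the first-order Taylor remainder of `∇ F` at the moving endpoint.
  have hle : ∀ s ∈ Set.Ico (0 : ℝ) 1, ‖err' s‖ ≤ L / 4 * ‖h‖ ^ 3 * s ^ 2 := fun s hs ↦ by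
    have htaylor := norm_sub_sub_fderiv_le_of_lipschitz_fderiv hF' hlip (x + s • h) x
    rw [sub_add_cancel_left, norm_neg, norm_smul, Real.norm_of_nonneg hs.1] at htaylor
    rw [norm_mul, Real.norm_eq_abs (inner ℝ _ _), sub_add_cancel_left]
    calc _ ≤ ‖(-(1 / 2) : ℝ)‖ * (L / 2 * (s * ‖h‖) ^ 2 * ‖h‖) := by
          gcongr
          exact (abs_real_inner_le_norm _ _).trans (by gcongr)
      _ = L / 4 * ‖h‖ ^ 3 * s ^ 2 := by norm_num; ring
  have key := image_norm_le_of_norm_deriv_right_le_deriv_boundary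
    (fun s _ ↦ (hderiv s).continuousAt.continuousWithinAt)
    (fun s _ ↦ (hderiv s).hasDerivWithinAt) (by simp [err]) hbound hle
    (Set.right_mem_Icc.2 zero_le_one)
  simpa [err, hh] using key

end Calculus

section CubicStep

open scoped Gradient

variable {E : Type*} [NormedAddCommGroup E] [InnerProductSpace ℝ E]

theorem cubic_le_of_le_add {a b R : ℝ} (ha : 0 ≤ a) (hb : 0 ≤ b) (hR : 0 ≤ R)
    (hbR : b ≤ R + a) :
    a * (R ^ 2 - a ^ 2 - b ^ 2) / 2 + a ^ 2 * b / 4 + b ^ 3 / 12 ≤ R ^ 3 / 3 := by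
  have hb3 : b ^ 2 * b ≤ b ^ 2 * (R + a) := by gcongr
  have hRb2 : R * b ^ 2 ≤ R * (R + a) ^ 2 := by gcongr
  nlinarith [hb3, hRb2, mul_nonneg ha (sq_nonneg (2 * a - R)), mul_nonneg hR (sq_nonneg (a - R)),
    mul_nonneg ha (sq_nonneg (b - R))]

theorem mul_norm_mul_norm_le_inner_of_norm_sub_le {g v : E} {c r : ℝ} (hcr : c ^ 2 + r ^ 2 ≤ 1)
    (h : ‖g - v‖ ≤ r * ‖v‖) : c * (‖g‖ * ‖v‖) ≤ ⟪g, v⟫ := by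
  have hsq : ‖g - v‖ ^ 2 ≤ (r * ‖v‖) ^ 2 := by gcongr
  rw [norm_sub_sq_real] at hsq
  nlinarith [sq_nonneg (‖g‖ - c * ‖v‖), mul_le_mul_of_nonneg_right hcr (sq_nonneg ‖v‖)]

theorem hasFDerivAt_norm_pow_three (x : E) :
    HasFDerivAt (fun u : E ↦ ‖u‖ ^ 3) ((3 * ‖x‖) • innerSL ℝ x) x := by
  have h := hasFDerivAt_norm_rpow x (p := 3) (by norm_num)
  rw [show (3 : ℝ) - 2 = 1 by norm_num, Real.rpow_one] at h
  exact_mod_cast h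

theorem add_add_smul_eq_zero_of_forall_cubic_le {T : E →L[ℝ] E}
    (hT : (T : E →ₗ[ℝ] E).IsSymmetric) {g h : E} {c M : ℝ}
    (hmin : ∀ u, c + ⟪g, h⟫ + 1 / 2 * ⟪T h, h⟫ + M / 6 * ‖h‖ ^ 3
      ≤ c + ⟪g, u⟫ + 1 / 2 * ⟪T u, u⟫ + M / 6 * ‖u‖ ^ 3) :
    g + T h + (M / 2 * ‖h‖) • h = 0 := by
  have hloc : IsLocalMin (fun u ↦ c + ⟪g, u⟫ + 1 / 2 * ⟪T u, u⟫ + M / 6 * ‖u‖ ^ 3) h :=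
    Filter.Eventually.of_forall hmin
  have hderiv := (((innerSL ℝ g).hasFDerivAt (x := h)).const_add c).add
    ((T.hasFDerivAt.inner ℝ (hasFDerivAt_id h)).const_mul (1 / 2)) |>.add
    ((hasFDerivAt_norm_pow_three h).const_mul (M / 6))
  refine ext_inner_right ℝ fun v ↦ ?_
  have hzero : ⟪g, v⟫ + 1 / 2 * (⟪T h, v⟫ + ⟪T v, h⟫) + M / 6 * (3 * ‖h‖ * ⟪h, v⟫) = 0 :=
    DFunLike.congr_fun (hloc.hasFDerivAt_eq_zero hderiv) v
  have hsymm : ⟪T v, h⟫ = ⟪T h, v⟫ := (hT v h).trans (real_inner_comm _ _)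
  rw [hsymm] at hzero
  rw [inner_add_left, inner_add_left, real_inner_smul_left, inner_zero_left]
  linarith

variable [CompleteSpace E] {F : E → ℝ} {H : E → E →L[ℝ] E} {L β : ℝ} {x z : E}

/-- The regularized second-order model of `F` at `z`, over any real Hilbert space and with an
arbitrary operator `H z` standing in for the Hessian; `cubicModel F f₁` is the case
`H = fderiv ℝ (∇ f₁)`. -/
noncomputable def regularizedModel (F : E → ℝ) (H : E → E →L[ℝ] E) (β M : ℝ) (x z : E) : ℝ :=
  F z + ⟪∇ F z, x - z⟫ + (1 / 2) * ⟪H z (x - z) + (3 * β) • (x - z), x - z⟫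
    + (M / 6) * ‖x - z‖ ^ 3

/-- The step `z ↦ x` solves the proximal equation `∇ F x = (3β + 2L‖z - x‖) (z - x)` up to an error
that accounts for the Taylor remainder of `∇ F` (the term `L / 2 * ‖z - x‖ ^ 2`) and for the error
in the Hessian (the term `β * ‖z - x‖`). -/
def IsInexactCubicStep (F : E → ℝ) (L β : ℝ) (z x : E) : Prop :=
  ‖∇ F x - (3 * β + 2 * L * ‖z - x‖) • (z - x)‖ ≤ L / 2 * ‖z - x‖ ^ 2 + β * ‖z - x‖

theorem isInexactCubicStep_of_forall_regularizedModel_le (hF' : Differentiable ℝ (∇ F))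
    (hlip : ∀ x y, ‖fderiv ℝ (∇ F) x - fderiv ℝ (∇ F) y‖ ≤ L * ‖x - y‖)
    (hHsymm : (H z : E →ₗ[ℝ] E).IsSymmetric) (hH : ‖H z - fderiv ℝ (∇ F) z‖ ≤ β)
    (hmin : ∀ u, regularizedModel F H β (4 * L) x z ≤ regularizedModel F H β (4 * L) u z) :
    IsInexactCubicStep F L β z x := by
  have hcrit : ∇ F z + (H z (x - z) + (3 * β) • (x - z)) + (4 * L / 2 * ‖x - z‖) • (x - z) = 0 :=
    add_add_smul_eq_zero_of_forall_cubic_le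
      (T := H z + (3 * β) • ContinuousLinearMap.id ℝ E)
      (hHsymm.add (LinearMap.IsSymmetric.id.smul (RCLike.conj_to_real)))
      fun u ↦ by simpa [regularizedModel] using hmin (u + z)
  have htaylor := norm_sub_sub_fderiv_le_of_lipschitz_fderiv hF' hlip z x
  have hhess : ‖H z (x - z) - fderiv ℝ (∇ F) z (x - z)‖ ≤ β * ‖x - z‖ :=
    (H z - fderiv ℝ (∇ F) z).le_of_opNorm_le hH (x - z)
  have hsplit : ∇ F x - (3 * β + 2 * L * ‖x - z‖) • (z - x) =
      (∇ F x - ∇ F z - fderiv ℝ (∇ F) z (x - z)) - (H z (x - z) - fderiv ℝ (∇ F) z (x - z)) := by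
    rw [← sub_eq_zero, ← hcrit]
    module
  rw [IsInexactCubicStep, norm_sub_rev z x, hsplit]
  exact (norm_sub_le _ _).trans (add_le_add htaylor hhess)

namespace IsInexactCubicStep

theorem norm_gradient_le (hL : 0 ≤ L) (hβ : 0 ≤ β) (hstep : IsInexactCubicStep F L β z x) :
    ‖∇ F x‖ ≤ 4 * β * ‖z - x‖ + 5 / 2 * L * ‖z - x‖ ^ 2 := by
  have htri := norm_le_norm_sub_add (∇ F x) ((3 * β + 2 * L * ‖z - x‖) • (z - x))
  rw [norm_smul, Real.norm_of_nonneg (by positivity)] at htri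
  rw [IsInexactCubicStep] at hstep
  linarith

theorem mul_norm_mul_norm_le_inner (hL : 0 ≤ L) (hβ : 0 ≤ β)
    (hstep : IsInexactCubicStep F L β z x) :
    9 / 10 * (‖∇ F x‖ * ‖z - x‖) ≤ ⟪∇ F x, z - x⟫ := by
  set κ := 3 * β + 2 * L * ‖z - x‖ with hκ
  have herr : ‖∇ F x - κ • (z - x)‖ ≤ 1 / 3 * ‖κ • (z - x)‖ := by
    rw [norm_smul, Real.norm_of_nonneg (by positivity)]
    refine hstep.trans ?_
    rw [hκ]
    nlinarith [mul_nonneg hL (sq_nonneg ‖z - x‖)]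
  rcases (show 0 ≤ κ by positivity).eq_or_lt with hκ0 | hκ0
  · have hgrad : ∇ F x = 0 := by simpa [← hκ0] using herr
    simp [hgrad]
  · have hinner := mul_norm_mul_norm_le_inner_of_norm_sub_le (c := 9 / 10) (by norm_num) herr
    rw [norm_smul, Real.norm_of_nonneg hκ0.le, real_inner_smul_right] at hinner
    exact le_of_mul_le_mul_left (by linarith) hκ0

theorem norm_gradient_mul_le (hL : 0 ≤ L) (hβ : 0 ≤ β) (hstep : IsInexactCubicStep F L β z x)
    {ρ : ℝ} (hρ : 0 ≤ ρ) :
    ‖∇ F x‖ * ρ ≤ ⟪∇ F x, z - x⟫ + 4 / 3 * β * ρ ^ 2 + 8 / 9 * L * ρ ^ 3 := by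
  have hinner := hstep.mul_norm_mul_norm_le_inner hL hβ
  have hnorm := hstep.norm_gradient_le hL hβ
  set a := ‖z - x‖
  have ha : 0 ≤ a := norm_nonneg _
  suffices hgap : ‖∇ F x‖ * (ρ - 9 / 10 * a) ≤ 4 / 3 * β * ρ ^ 2 + 8 / 9 * L * ρ ^ 3 by linarith
  rcases le_total ρ (9 / 10 * a) with hρa | hρa
  · exact (mul_nonpos_of_nonneg_of_nonpos (norm_nonneg _) (by linarith)).trans (by positivity)
  have hquad : 4 * a * (ρ - 9 / 10 * a) ≤ 4 / 3 * ρ ^ 2 := by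
    nlinarith [sq_nonneg (ρ - 3 / 2 * a), sq_nonneg a]
  have hcube : 5 / 2 * a ^ 2 * (ρ - 9 / 10 * a) ≤ 8 / 9 * ρ ^ 3 := by
    have : 0 ≤ (ρ - a) ^ 2 * (ρ + 2 * a) := by positivity
    nlinarith [pow_nonneg ha 3, mul_nonneg (sq_nonneg a) hρ, pow_nonneg hρ 3]
  calc ‖∇ F x‖ * (ρ - 9 / 10 * a)
      ≤ (4 * β * a + 5 / 2 * L * a ^ 2) * (ρ - 9 / 10 * a) := by gcongr
    _ = β * (4 * a * (ρ - 9 / 10 * a)) + L * (5 / 2 * a ^ 2 * (ρ - 9 / 10 * a)) := by ring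
    _ ≤ β * (4 / 3 * ρ ^ 2) + L * (8 / 9 * ρ ^ 3) := by gcongr
    _ = 4 / 3 * β * ρ ^ 2 + 8 / 9 * L * ρ ^ 3 := by ring

theorem inner_gradient_sub_le (hstep : IsInexactCubicStep F L β z x) (s : E) :
    ⟪∇ F x, x - s⟫ ≤ (3 * β + 2 * L * ‖z - x‖) * ((‖z - s‖ ^ 2 - ‖z - x‖ ^ 2 - ‖x - s‖ ^ 2) / 2)
      + (L / 2 * ‖z - x‖ ^ 2 + β * ‖z - x‖) * ‖x - s‖ := by
  have hpolar : ⟪z - x, x - s⟫ = (‖z - s‖ ^ 2 - ‖z - x‖ ^ 2 - ‖x - s‖ ^ 2) / 2 := by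
    rw [← sub_add_sub_cancel z x s, norm_add_sq_real]
    ring
  have herr := (real_inner_le_norm (∇ F x - (3 * β + 2 * L * ‖z - x‖) • (z - x)) (x - s)).trans
    (mul_le_mul_of_nonneg_right hstep (norm_nonneg _))
  rw [inner_sub_left, real_inner_smul_left, hpolar] at herr
  linarith

theorem sub_le_of_gradient_eq_zero (hL : 0 ≤ L) (hβ : 0 ≤ β) (hF : Differentiable ℝ F)
    (hF' : Differentiable ℝ (∇ F))
    (hlip : ∀ x y, ‖fderiv ℝ (∇ F) x - fderiv ℝ (∇ F) y‖ ≤ L * ‖x - y‖)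
    (hstep : IsInexactCubicStep F L β z x) {s : E} (hs : ∇ F s = 0) :
    F x - F s ≤ 3 / 4 * β * ‖z - s‖ ^ 2 + L / 3 * ‖z - s‖ ^ 3 := by
  have htrap := (abs_le.1 (abs_sub_sub_trapezoid_le hF hF' hlip s x)).2
  rw [hs, zero_add] at htrap
  have hinner := hstep.inner_gradient_sub_le s
  have htri : ‖x - s‖ ≤ ‖z - s‖ + ‖z - x‖ := by
    rw [add_comm, norm_sub_rev z x]
    exact norm_sub_le_norm_sub_add_norm_sub x z s
  set a := ‖z - x‖
  set b := ‖x - s‖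
  set R := ‖z - s‖
  have hquad : 3 / 4 * (R ^ 2 - a ^ 2 - b ^ 2) + a * b / 2 ≤ 3 / 4 * R ^ 2 := by
    nlinarith [sq_nonneg (a - b), sq_nonneg (a + b)]
  have hcube := cubic_le_of_le_add (norm_nonneg _) (norm_nonneg _) (norm_nonneg _) htri
  linarith [mul_le_mul_of_nonneg_left hquad hβ, mul_le_mul_of_nonneg_left hcube hL]

theorem le_convexCombination_add (hL : 0 ≤ L) (hβ : 0 ≤ β) (hconv : ConvexOn ℝ Set.univ F)
    (hF : Differentiable ℝ F) {θ : ℝ} (hθ₀ : 0 ≤ θ) (hθ₁ : θ ≤ 1) {x x' y : E}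
    (hstep : IsInexactCubicStep F L β ((1 - θ) • x + θ • y) x') (u : E) :
    F x' ≤ (1 - θ) * F x + θ * (F x' + ⟪∇ F x', u - x'⟫)
      + 4 / 3 * β * (θ * ‖u - y‖) ^ 2 + 8 / 9 * L * (θ * ‖u - y‖) ^ 3 := by
  have hsupport := mul_le_mul_of_nonneg_left (add_inner_gradient_le_of_convexOn hconv hF x' x)
    (sub_nonneg.2 hθ₁)
  have hfenchel := hstep.norm_gradient_mul_le hL hβ (mul_nonneg hθ₀ (norm_nonneg (u - y)))
  have hcs := mul_le_mul_of_nonneg_left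
    (neg_le_of_abs_le (abs_real_inner_le_norm (∇ F x') (u - y))) hθ₀
  have hsplit : ⟪∇ F x', (1 - θ) • x + θ • y - x'⟫ =
      (1 - θ) * ⟪∇ F x', x - x'⟫ + θ * (⟪∇ F x', u - x'⟫ - ⟪∇ F x', u - y⟫) := by
    simp only [inner_sub_right, inner_add_right, real_inner_smul_right]
    ring
  linarith

end IsInexactCubicStep

end CubicStep

section MidpointConvexity

variable {E : Type*} [NormedAddCommGroup E] [InnerProductSpace ℝ E]

theorem two_mul_norm_pow_three_add_le (p q : E) :
    2 * (‖p‖ ^ 3 + ‖q‖ ^ 3) ≤ ‖p + q‖ ^ 3 + ‖p - q‖ ^ 3 := by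
  have hpar := parallelogram_law_with_norm ℝ p q
  set S := √(‖p‖ ^ 2 + ‖q‖ ^ 2)
  have hS : 0 ≤ S := Real.sqrt_nonneg _
  have hS2 : S ^ 2 = ‖p‖ ^ 2 + ‖q‖ ^ 2 := Real.sq_sqrt (by positivity)
  have hp : ‖p‖ ^ 2 * ‖p‖ ≤ ‖p‖ ^ 2 * S := by
    gcongr; exact Real.le_sqrt_of_sq_le (by nlinarith [sq_nonneg ‖q‖])
  have hq : ‖q‖ ^ 2 * ‖q‖ ≤ ‖q‖ ^ 2 * S := by
    gcongr; exact Real.le_sqrt_of_sq_le (by nlinarith [sq_nonneg ‖p‖])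
  have htangent (r : ℝ) (hr : 0 ≤ r) : 3 / 2 * S * r ^ 2 - S ^ 3 / 2 ≤ r ^ 3 := by
    have : 0 ≤ (r - S) ^ 2 * (r + S / 2) :=
      mul_nonneg (sq_nonneg _) (add_nonneg hr (div_nonneg hS zero_le_two))
    linarith
  calc 2 * (‖p‖ ^ 3 + ‖q‖ ^ 3)
      ≤ 2 * (S * (‖p‖ ^ 2 + ‖q‖ ^ 2)) := by linarith
    _ = 3 / 2 * S * (‖p + q‖ ^ 2 + ‖p - q‖ ^ 2) - S ^ 3 := by
        rw [pow_succ S 2, hS2]; linear_combination (-(3 / 2) * S) * hpar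
    _ ≤ ‖p + q‖ ^ 3 + ‖p - q‖ ^ 3 := by
        linarith [htangent _ (norm_nonneg (p + q)), htangent _ (norm_nonneg (p - q))]

/-- Midpoint convexity of `f` with a gain `φ ‖u - v‖`. Restricting uniform convexity to midpoints
loses only a constant factor in `growth` and makes the powers of the norm a consequence of the
parallelogram law. -/
def UniformMidpointConvex (φ : ℝ → ℝ) (f : E → ℝ) : Prop :=
  ∀ u v, f (midpoint ℝ u v) + φ ‖u - v‖ ≤ (f u + f v) / 2

theorem midpoint_sub_add_half_smul_sub (u v c : E) :
    midpoint ℝ u v - c + (1 / 2 : ℝ) • (u - v) = u - c := by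
  rw [midpoint_eq_smul_add, invOf_eq_inv]; module

theorem midpoint_sub_sub_half_smul_sub (u v c : E) :
    midpoint ℝ u v - c - (1 / 2 : ℝ) • (u - v) = v - c := by
  rw [midpoint_eq_smul_add, invOf_eq_inv]; module

theorem norm_half_smul (v : E) : ‖(1 / 2 : ℝ) • v‖ = ‖v‖ / 2 := by
  rw [norm_smul, Real.norm_of_nonneg (by norm_num)]; ring

theorem uniformMidpointConvex_norm_sub_sq (c : E) :
    UniformMidpointConvex (fun r ↦ r ^ 2 / 4) (fun u ↦ ‖u - c‖ ^ 2) := fun u v ↦ by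
  have hpar := parallelogram_law_with_norm ℝ (midpoint ℝ u v - c) ((1 / 2 : ℝ) • (u - v))
  rw [midpoint_sub_add_half_smul_sub, midpoint_sub_sub_half_smul_sub, norm_half_smul] at hpar
  linarith

theorem uniformMidpointConvex_norm_sub_pow_three (c : E) :
    UniformMidpointConvex (fun r ↦ r ^ 3 / 8) (fun u ↦ ‖u - c‖ ^ 3) := fun u v ↦ by
  have hcube := two_mul_norm_pow_three_add_le (midpoint ℝ u v - c) ((1 / 2 : ℝ) • (u - v))
  rw [midpoint_sub_add_half_smul_sub, midpoint_sub_sub_half_smul_sub, norm_half_smul] at hcube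
  linarith

theorem uniformMidpointConvex_affine (b : ℝ) (g p : E) :
    UniformMidpointConvex (fun _ ↦ 0) (fun u ↦ b + ⟪g, u - p⟫) := fun u v ↦ by
  simp only [midpoint_eq_smul_add, inner_sub_right, inner_add_right, real_inner_smul_right,
    invOf_eq_inv]
  linarith

namespace UniformMidpointConvex

variable {φ φ' : ℝ → ℝ} {f f' : E → ℝ}

theorem add (hf : UniformMidpointConvex φ f) (hf' : UniformMidpointConvex φ' f') :
    UniformMidpointConvex (fun r ↦ φ r + φ' r) (fun u ↦ f u + f' u) := fun u v ↦ by
  linarith [hf u v, hf' u v]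

theorem const_add (b : ℝ) (hf : UniformMidpointConvex φ f) :
    UniformMidpointConvex φ (fun u ↦ b + f u) := fun u v ↦ by
  linarith [hf u v]

theorem const_mul {b : ℝ} (hb : 0 ≤ b) (hf : UniformMidpointConvex φ f) :
    UniformMidpointConvex (fun r ↦ b * φ r) (fun u ↦ b * f u) := fun u v ↦ by
  linarith [mul_le_mul_of_nonneg_left (hf u v) hb]

theorem growth (hf : UniformMidpointConvex φ f) {y : E} (hmin : ∀ u, f y ≤ f u) (u : E) :
    f y + 2 * φ ‖u - y‖ ≤ f u := by
  linarith [hf u y, hmin (midpoint ℝ u y)]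

end UniformMidpointConvex

end MidpointConvexity

section AcceleratedRun

open scoped Gradient

/-- The tetrahedral numbers `t (t + 1) (t + 2) / 6`, as reals. They are the reciprocals of the
coefficients of the method, `A t = (tetrahedral (t + 1))⁻¹`, and `tetrahedral t` is the total weight
of the values of `F` entering `ψ t`. -/
noncomputable def tetrahedral (t : ℕ) : ℝ := t * (t + 1) * (t + 2) / 6

theorem tetrahedral_one : tetrahedral 1 = 1 := by norm_num [tetrahedral]

theorem tetrahedral_pos {t : ℕ} (ht : 0 < t) : 0 < tetrahedral t := by
  unfold tetrahedral; positivity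

theorem tetrahedral_le_succ (t : ℕ) : tetrahedral t ≤ tetrahedral (t + 1) := by
  unfold tetrahedral; gcongr <;> exact t.le_succ

theorem tetrahedral_succ_mul (t : ℕ) :
    tetrahedral (t + 1) * (3 / (t + 3)) = tetrahedral (t + 1) - tetrahedral t := by
  simp only [tetrahedral]; push_cast; field_simp; ring

theorem tetrahedral_succ_mul_sq_le (t : ℕ) :
    tetrahedral (t + 1) * (3 / (t + 3)) ^ 2 ≤ 3 / 2 * (t + 1) := by
  have heq : tetrahedral (t + 1) * (3 / (t + 3)) ^ 2 = 3 / 2 * (t + 1) * ((t + 2) / (t + 3)) := by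
    simp only [tetrahedral]; push_cast; field_simp; ring
  rw [heq]
  exact mul_le_of_le_one_right (by positivity) ((div_le_one (by positivity)).2 (by linarith))

theorem tetrahedral_succ_mul_pow_three_le (t : ℕ) :
    tetrahedral (t + 1) * (3 / (t + 3)) ^ 3 ≤ 9 / 2 := by
  have heq : tetrahedral (t + 1) * (3 / (t + 3)) ^ 3
      = 9 / 2 * ((t + 1) / (t + 3) * ((t + 2) / (t + 3))) := by
    simp only [tetrahedral]; push_cast; field_simp; ring
  rw [heq]
  refine mul_le_of_le_one_right (by norm_num) (mul_le_one₀ ?_ (by positivity) ?_) <;>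
    exact (div_le_one (by positivity)).2 (by linarith)

theorem one_div_tetrahedral_le {t : ℕ} (ht : 0 < t) : 1 / tetrahedral t ≤ 6 / (t : ℝ) ^ 3 := by
  rw [div_le_div_iff₀ (tetrahedral_pos ht) (pow_pos (Nat.cast_pos.2 ht) 3)]
  have hslack : 0 ≤ 3 * (t : ℝ) ^ 2 + 2 * t := by positivity
  unfold tetrahedral
  linarith

theorem add_three_div_tetrahedral_le {t : ℕ} (ht : 0 < t) :
    (t + 3) / tetrahedral t ≤ 6 / (t : ℝ) ^ 2 := by
  rw [div_le_div_iff₀ (tetrahedral_pos ht) (pow_pos (Nat.cast_pos.2 ht) 2)]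
  unfold tetrahedral
  linarith [t.cast_nonneg (α := ℝ)]

variable {E : Type*} [NormedAddCommGroup E] [InnerProductSpace ℝ E] [CompleteSpace E]

theorem IsInexactCubicStep.tetrahedral_succ_mul_le {F : E → ℝ} {L β : ℝ} (hL : 0 ≤ L)
    (hβ : 0 ≤ β) (hconv : ConvexOn ℝ Set.univ F) (hF : Differentiable ℝ F) {t : ℕ} {x x' y : E}
    (hstep : IsInexactCubicStep F L β ((1 - 3 / ((t : ℝ) + 3)) • x + (3 / ((t : ℝ) + 3)) • y) x')
    (u : E) :
    tetrahedral (t + 1) * F x' ≤ tetrahedral t * F x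
      + (tetrahedral (t + 1) - tetrahedral t) * (F x' + ⟪∇ F x', u - x'⟫)
      + 2 * (t + 1) * β * ‖u - y‖ ^ 2 + 4 * L * ‖u - y‖ ^ 3 := by
  set r := ‖u - y‖
  set ℓ := F x' + ⟪∇ F x', u - x'⟫
  have hθ : 3 / ((t : ℝ) + 3) ≤ 1 := (div_le_one (by positivity)).2 (by simp)
  have hquad : tetrahedral (t + 1) * (4 / 3 * β * (3 / (t + 3) * r) ^ 2)
      ≤ 2 * (t + 1) * β * r ^ 2 := by
    linarith [mul_le_mul_of_nonneg_right (tetrahedral_succ_mul_sq_le t)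
      (show 0 ≤ 4 / 3 * β * r ^ 2 by positivity)]
  have hcube : tetrahedral (t + 1) * (8 / 9 * L * (3 / (t + 3) * r) ^ 3) ≤ 4 * L * r ^ 3 := by
    linarith [mul_le_mul_of_nonneg_right (tetrahedral_succ_mul_pow_three_le t)
      (show 0 ≤ 8 / 9 * L * r ^ 3 by positivity)]
  calc tetrahedral (t + 1) * F x'
      ≤ tetrahedral (t + 1) * ((1 - 3 / (t + 3)) * F x + 3 / (t + 3) * ℓ
          + 4 / 3 * β * (3 / (t + 3) * r) ^ 2 + 8 / 9 * L * (3 / (t + 3) * r) ^ 3) :=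
        mul_le_mul_of_nonneg_left
          (hstep.le_convexCombination_add hL hβ hconv hF (by positivity) hθ u)
          (tetrahedral_pos t.succ_pos).le
    _ = tetrahedral t * F x + (tetrahedral (t + 1) - tetrahedral t) * ℓ
          + tetrahedral (t + 1) * (4 / 3 * β * (3 / (t + 3) * r) ^ 2)
          + tetrahedral (t + 1) * (8 / 9 * L * (3 / (t + 3) * r) ^ 3) := by
        linear_combination (ℓ - F x) * tetrahedral_succ_mul t
    _ ≤ _ := by linarith

/-- The iterates `x`, `y`, `w`, estimating functions `ψ` and coefficients `A` of the accelerated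
cubic-regularized Newton method for `F` that uses `H` in place of the Hessian. As in the method,
`y`, `w` and `ψ` carry no information at index `0`. -/
structure IsAcceleratedCubicRun (F : E → ℝ) (H : E → E →L[ℝ] E) (L β : ℝ) (x y w : ℕ → E)
    (ψ : ℕ → E → ℝ) (A : ℕ → ℝ) : Prop where
  first_step : ∀ u,
    regularizedModel F H β (4 * L) (x 1) (x 0) ≤ regularizedModel F H β (4 * L) u (x 0)
  estimate_one : ψ 1 = fun u ↦ F (x 1) + 8 * β * ‖u - x 0‖ ^ 2 + 16 * L * ‖u - x 0‖ ^ 3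
  coeff_zero : A 0 = 1
  coeff_rec : ∀ t : ℕ, 1 ≤ t → A t = A (t - 1) * (1 - 3 / ((t : ℝ) + 3))
  mix : ∀ t : ℕ, 1 ≤ t → w t = (1 - 3 / ((t : ℝ) + 3)) • x t + (3 / ((t : ℝ) + 3)) • y t
  step : ∀ t : ℕ, 1 ≤ t → ∀ u,
    regularizedModel F H β (4 * L) (x (t + 1)) (w t) ≤ regularizedModel F H β (4 * L) u (w t)
  estimate_rec : ∀ t : ℕ, 1 ≤ t → ψ (t + 1) = fun u ↦ ψ t u + 4 * β * ‖u - x 0‖ ^ 2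
    + (3 / (A t * ((t : ℝ) + 3))) * (F (x (t + 1)) + ⟪∇ F (x (t + 1)), u - x (t + 1)⟫)
  estimate_min : ∀ t : ℕ, 1 ≤ t → ∀ u, ψ t (y t) ≤ ψ t u

namespace IsAcceleratedCubicRun

variable {F : E → ℝ} {H : E → E →L[ℝ] E} {L β : ℝ} {x y w : ℕ → E} {ψ : ℕ → E → ℝ} {A : ℕ → ℝ}

theorem coeff_eq (hrun : IsAcceleratedCubicRun F H L β x y w ψ A) (t : ℕ) :
    A t = (tetrahedral (t + 1))⁻¹ := by
  induction t with
  | zero => rw [hrun.coeff_zero, tetrahedral_one, inv_one]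
  | succ t ih =>
    rw [hrun.coeff_rec (t + 1) t.succ_pos, add_tsub_cancel_right, ih]
    simp only [tetrahedral]
    push_cast
    field_simp
    ring

theorem estimate_succ (hrun : IsAcceleratedCubicRun F H L β x y w ψ A) {t : ℕ} (ht : 1 ≤ t) :
    ψ (t + 1) = fun u ↦ ψ t u + 4 * β * ‖u - x 0‖ ^ 2 + (tetrahedral (t + 1) - tetrahedral t)
      * (F (x (t + 1)) + ⟪∇ F (x (t + 1)), u - x (t + 1)⟫) := by
  have hcoeff : 3 / (A t * ((t : ℝ) + 3)) = tetrahedral (t + 1) - tetrahedral t := by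
    rw [← tetrahedral_succ_mul, hrun.coeff_eq, mul_comm _ ((t : ℝ) + 3), ← div_div, div_inv_eq_mul,
      mul_comm]
  rw [hrun.estimate_rec t ht, hcoeff]

theorem uniformMidpointConvex_estimate (hL : 0 ≤ L) (hβ : 0 ≤ β)
    (hrun : IsAcceleratedCubicRun F H L β x y w ψ A) {t : ℕ} (ht : 1 ≤ t) :
    UniformMidpointConvex (fun r ↦ (t + 1) * β * r ^ 2 + 2 * L * r ^ 3) (ψ t) := by
  have hsq := uniformMidpointConvex_norm_sub_sq (x 0)
  have hcube := uniformMidpointConvex_norm_sub_pow_three (x 0)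
  induction t, ht using Nat.le_induction with
  | base =>
    rw [hrun.estimate_one]
    convert ((hsq.const_mul (b := 8 * β) (by positivity)).const_add (F (x 1))).add
      (hcube.const_mul (b := 16 * L) (by positivity)) using 2
    push_cast; ring
  | succ t ht ih =>
    rw [hrun.estimate_succ ht]
    convert (ih.add (hsq.const_mul (b := 4 * β) (by positivity))).add
      ((uniformMidpointConvex_affine _ _ _).const_mul
        (sub_nonneg.2 (tetrahedral_le_succ t))) using 2
    push_cast; ring

theorem estimate_growth (hL : 0 ≤ L) (hβ : 0 ≤ β)
    (hrun : IsAcceleratedCubicRun F H L β x y w ψ A) {t : ℕ} (ht : 1 ≤ t) (u : E) :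
    ψ t (y t) + 2 * (t + 1) * β * ‖u - y t‖ ^ 2 + 4 * L * ‖u - y t‖ ^ 3 ≤ ψ t u := by
  linarith [(hrun.uniformMidpointConvex_estimate hL hβ ht).growth (hrun.estimate_min t ht) u]

theorem estimate_le (hconv : ConvexOn ℝ Set.univ F) (hF : Differentiable ℝ F)
    (hrun : IsAcceleratedCubicRun F H L β x y w ψ A) {t : ℕ} (ht : 1 ≤ t) (u : E) :
    ψ t u ≤ F (x 1) + (tetrahedral t - 1) * F u + 4 * (t + 1) * β * ‖u - x 0‖ ^ 2
      + 16 * L * ‖u - x 0‖ ^ 3 := by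
  induction t, ht using Nat.le_induction with
  | base =>
    rw [hrun.estimate_one, tetrahedral_one]
    exact le_of_eq (by push_cast; ring)
  | succ t ht ih =>
    have hsupport := mul_le_mul_of_nonneg_left
      (add_inner_gradient_le_of_convexOn hconv hF (x (t + 1)) u)
      (sub_nonneg.2 (tetrahedral_le_succ t))
    rw [hrun.estimate_succ ht]
    push_cast
    linarith

theorem tetrahedral_mul_le_estimate (hL : 0 ≤ L) (hβ : 0 ≤ β) (hconv : ConvexOn ℝ Set.univ F)
    (hF : Differentiable ℝ F) (hrun : IsAcceleratedCubicRun F H L β x y w ψ A)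
    (hstep : ∀ t : ℕ, 1 ≤ t → IsInexactCubicStep F L β (w t) (x (t + 1))) {t : ℕ} (ht : 1 ≤ t) :
    tetrahedral t * F (x t) ≤ ψ t (y t) := by
  induction t, ht using Nat.le_induction with
  | base =>
    have hreg : 0 ≤ 8 * β * ‖y 1 - x 0‖ ^ 2 + 16 * L * ‖y 1 - x 0‖ ^ 3 := by positivity
    rw [hrun.estimate_one, tetrahedral_one]
    linarith
  | succ t ht ih =>
    have hcouple := (hrun.mix t ht ▸ hstep t ht).tetrahedral_succ_mul_le hL hβ hconv hF (y (t + 1))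
    have hgrowth := hrun.estimate_growth hL hβ ht (y (t + 1))
    have hreg : 0 ≤ 4 * β * ‖y (t + 1) - x 0‖ ^ 2 := by positivity
    rw [hrun.estimate_succ ht]
    linarith

theorem tetrahedral_mul_sub_le (hL : 0 ≤ L) (hβ : 0 ≤ β) (hconv : ConvexOn ℝ Set.univ F)
    (hF : Differentiable ℝ F) (hF' : Differentiable ℝ (∇ F))
    (hlip : ∀ x y, ‖fderiv ℝ (∇ F) x - fderiv ℝ (∇ F) y‖ ≤ L * ‖x - y‖)
    (hHsymm : ∀ z, (H z : E →ₗ[ℝ] E).IsSymmetric) (hH : ∀ z, ‖H z - fderiv ℝ (∇ F) z‖ ≤ β)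
    (hrun : IsAcceleratedCubicRun F H L β x y w ψ A) {s : E} (hs : ∀ u, F s ≤ F u) {t : ℕ}
    (ht : 1 ≤ t) :
    tetrahedral t * (F (x t) - F s)
      ≤ (4 * t + 5) * β * ‖x 0 - s‖ ^ 2 + 49 / 3 * L * ‖x 0 - s‖ ^ 3 := by
  have hstep {z x : E} := isInexactCubicStep_of_forall_regularizedModel_le (z := z) (x := x)
    hF' hlip (hHsymm z) (hH z)
  have hfirst := (hstep hrun.first_step).sub_le_of_gradient_eq_zero hL hβ hF hF' hlip
    (gradient_eq_zero_of_forall_le hs)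
  have hlower := hrun.tetrahedral_mul_le_estimate hL hβ hconv hF
    (fun t ht ↦ hstep (hrun.step t ht)) ht
  have hmin := hrun.estimate_min t ht s
  have hupper := hrun.estimate_le hconv hF ht s
  rw [norm_sub_rev s] at hupper
  have hslack : 0 ≤ β * ‖x 0 - s‖ ^ 2 := by positivity
  linarith

end IsAcceleratedCubicRun

theorem stmt_0_general {F : E → ℝ} {H : E → E →L[ℝ] E} {L β : ℝ} (hL : 0 ≤ L)
    (hconv : ConvexOn ℝ Set.univ F) (hF : ContDiff ℝ 2 F)
    (hlip : ∀ x y, ‖fderiv ℝ (∇ F) x - fderiv ℝ (∇ F) y‖ ≤ L * ‖x - y‖)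
    (hHsymm : ∀ z, (H z : E →ₗ[ℝ] E).IsSymmetric) (hH : ∀ z, ‖H z - fderiv ℝ (∇ F) z‖ ≤ β)
    {x y w : ℕ → E} {ψ : ℕ → E → ℝ} {A : ℕ → ℝ}
    (hrun : IsAcceleratedCubicRun F H L β x y w ψ A) {s : E} (hs : ∀ u, F s ≤ F u) {t : ℕ}
    (ht : 1 ≤ t) :
    F (x t) - F s ≤ 98 * L * ‖x 0 - s‖ ^ 3 / t ^ 3 + 24 * β * ‖x 0 - s‖ ^ 2 / t ^ 2 := by
  have hβ : 0 ≤ β := (norm_nonneg _).trans (hH 0)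
  have hpot := hrun.tetrahedral_mul_sub_le hL hβ hconv (hF.differentiable two_ne_zero)
    (differentiable_gradient_of_contDiff hF) hlip hHsymm hH hs ht
  calc F (x t) - F s
      ≤ ((4 * t + 5) * β * ‖x 0 - s‖ ^ 2 + 49 / 3 * L * ‖x 0 - s‖ ^ 3) / tetrahedral t :=
        (le_div_iff₀' (tetrahedral_pos ht)).2 hpot
    _ ≤ (4 * (t + 3) * β * ‖x 0 - s‖ ^ 2 + 49 / 3 * L * ‖x 0 - s‖ ^ 3) / tetrahedral t :=
        div_le_div_of_nonneg_right (by gcongr; linarith) (tetrahedral_pos ht).le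
    _ = 49 / 3 * L * ‖x 0 - s‖ ^ 3 * (1 / tetrahedral t)
          + 4 * β * ‖x 0 - s‖ ^ 2 * ((t + 3) / tetrahedral t) := by ring
    _ ≤ 49 / 3 * L * ‖x 0 - s‖ ^ 3 * (6 / t ^ 3) + 4 * β * ‖x 0 - s‖ ^ 2 * (6 / t ^ 2) :=
        add_le_add (mul_le_mul_of_nonneg_left (one_div_tetrahedral_le ht) (by positivity))
          (mul_le_mul_of_nonneg_left (add_three_div_tetrahedral_le ht) (by positivity))
    _ = 98 * L * ‖x 0 - s‖ ^ 3 / t ^ 3 + 24 * β * ‖x 0 - s‖ ^ 2 / t ^ 2 := by ring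

end AcceleratedRun

/-- Convergence of the (distributed) accelerated cubic-regularized Newton
method with an inexact (`β`-similar) Hessian: for every `t ≥ 1`,
`F(x_t) − F(x*) ≤ 98L‖x₀ − x*‖³/t³ + 48β‖x₀ − x*‖²/t²`. -/
theorem stmt_0 {d : ℕ} (F f₁ : EuclideanSpace ℝ (Fin d) → ℝ) (L β : ℝ)
    (hL : 0 < L) (hβ : 0 < β)
    (hFconv : ConvexOn ℝ Set.univ F)
    (hFsmooth : ContDiff ℝ 2 F) (hf₁smooth : ContDiff ℝ 2 f₁)
    (hlip : ∀ x y : EuclideanSpace ℝ (Fin d),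
      ‖fderiv ℝ (gradient F) x - fderiv ℝ (gradient F) y‖ ≤ L * ‖x - y‖)
    (hsim : ∀ x : EuclideanSpace ℝ (Fin d),
      ‖fderiv ℝ (gradient f₁) x - fderiv ℝ (gradient F) x‖ ≤ β)
    (xstar : EuclideanSpace ℝ (Fin d)) (hmin : ∀ u, F xstar ≤ F u)
    (x y w : ℕ → EuclideanSpace ℝ (Fin d))
    (ψ : ℕ → EuclideanSpace ℝ (Fin d) → ℝ) (A : ℕ → ℝ)
    -- x₁ is a global minimizer of F̃_{4L}(·, x₀)
    (hx1 : ∀ u, cubicModel F f₁ β (4 * L) (x 1) (x 0) ≤ cubicModel F f₁ β (4 * L) u (x 0))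
    -- ψ₁(x) = F(x₁) + 8β‖x − x₀‖² + 16L‖x − x₀‖³ and y₁ is a global minimizer of ψ₁
    (hψ1 : ψ 1 = fun u => F (x 1) + 8 * β * ‖u - x 0‖ ^ 2 + 16 * L * ‖u - x 0‖ ^ 3)
    (hy1 : ∀ u, ψ 1 (y 1) ≤ ψ 1 u)
    -- A₀ = 1 and A_t = A_{t−1}(1 − 3/(t+3)) for t ≥ 1
    (hA0 : A 0 = 1)
    (hA : ∀ t : ℕ, 1 ≤ t → A t = A (t - 1) * (1 - 3 / ((t : ℝ) + 3)))
    -- w_t = (1 − 3/(t+3))x_t + (3/(t+3))y_t for t ≥ 1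
    (hw : ∀ t : ℕ, 1 ≤ t →
      w t = (1 - 3 / ((t : ℝ) + 3)) • x t + (3 / ((t : ℝ) + 3)) • y t)
    -- x_{t+1} is a global minimizer of F̃_{4L}(·, w_t) for t ≥ 1
    (hx : ∀ t : ℕ, 1 ≤ t → ∀ u,
      cubicModel F f₁ β (4 * L) (x (t + 1)) (w t) ≤ cubicModel F f₁ β (4 * L) u (w t))
    -- ψ_{t+1}(x) = ψ_t(x) + 4β‖x − x₀‖² + (3/(A_t(t+3)))(F(x_{t+1}) + ⟨∇F(x_{t+1}), x − x_{t+1}⟩)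
    (hψ : ∀ t : ℕ, 1 ≤ t → ψ (t + 1) = fun u => ψ t u + 4 * β * ‖u - x 0‖ ^ 2
      + (3 / (A t * ((t : ℝ) + 3)))
          * (F (x (t + 1)) + ⟪gradient F (x (t + 1)), u - x (t + 1)⟫))
    -- y_{t+1} is a global minimizer of ψ_{t+1} for t ≥ 1
    (hy : ∀ t : ℕ, 1 ≤ t → ∀ u, ψ t (y t) ≤ ψ t u) :
    ∀ t : ℕ, 1 ≤ t →
      F (x t) - F xstar ≤ 98 * L * ‖x 0 - xstar‖ ^ 3 / (t : ℝ) ^ 3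
        + 48 * β * ‖x 0 - xstar‖ ^ 2 / (t : ℝ) ^ 2 := by
  intro t ht
  refine (stmt_0_general hL.le hFconv hFsmooth hlip (isSymmetric_fderiv_gradient hf₁smooth) hsim
    ⟨hx1, hψ1, hA0, hA, hw, hx, hψ, hy⟩ hmin ht).trans ?_
  gcongr
  norm_num
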